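/- Let γ(t) = (t,t²,t³), so γ'(t) = (1,2t,3t²), γ''(t) = (0,2,6t), γ'''(t) = (0,0,6). Let r ≥ 1 be an integer, let R > 0, c ≥ 1, and a > 0. For each integer l with 0 ≤ l < r define S_l = {A γ'(l/r) + B γ''(l/r) + C γ'''(l/r) : a ≤ |A| ≤ c r^{−1}, |B| ≤ c r^{−2}, |C| ≤ c R^{−1}}. If S_l ∩ S_{l'} ≠ ∅ for two integers 0 ≤ l, l' < r, then |l − l'| ≤ 2c/(a r). -/

import Mathlib

open Real Set

noncomputable section

/-- `γ'(t) = (1, 2t, 3t²)`. -/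
def momD1 (t : ℝ) : Fin 3 → ℝ := ![1, 2*t, 3*t^2]

/-- `γ''(t) = (0, 2, 6t)`. -/
def momD2 (t : ℝ) : Fin 3 → ℝ := ![0, 2, 6*t]

/-- `γ'''(t) = (0, 0, 6)`. -/
def momD3 : Fin 3 → ℝ := ![0, 0, 6]

/-- The box `S_l` in the frame `(γ'(l/r), γ''(l/r), γ'''(l/r))` with first coefficient
bounded away from zero. -/
def Sbox (r : ℕ) (R c a : ℝ) (l : ℕ) : Set (Fin 3 → ℝ) :=
  {ξ | ∃ A B C : ℝ, a ≤ |A| ∧ |A| ≤ c / r ∧ |B| ≤ c / r^2 ∧ |C| ≤ c / R ∧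
        ξ = A • momD1 ((l:ℝ)/r) + B • momD2 ((l:ℝ)/r) + C • momD3}

/-! Written in the frame at `t`, the first two coefficients of `ξ` are `ξ₀` and `ξ₁ / 2 - t ξ₀`.
The first does not depend on `t`, and the second is affine in `t` with slope `-ξ₀`: if it is small
at two parameters while `|ξ₀| ≥ a`, the parameters are close. -/

/-- The part of the box in the frame `(γ'(t), γ''(t), γ'''(t))` responsible for the overlap bound:
the first coefficient has modulus at least `a` and the second at most `b`, with no upper bound on
the first and no condition on the third. -/
def highSlab (a b t : ℝ) : Set (Fin 3 → ℝ) :=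
  {ξ | ∃ A B C : ℝ, a ≤ |A| ∧ |B| ≤ b ∧ ξ = A • momD1 t + B • momD2 t + C • momD3}

theorem Sbox_subset_highSlab {r : ℕ} {R c a : ℝ} {l : ℕ} :
    Sbox r R c a l ⊆ highSlab a (c / (r : ℝ) ^ 2) ((l : ℝ) / r) := by
  rintro ξ ⟨A, B, C, hA, -, hB, -, hξ⟩
  exact ⟨A, B, C, hA, hB, hξ⟩

theorem momD_combination_eq (A B C t : ℝ) :
    A • momD1 t + B • momD2 t + C • momD3 =
      ![A, 2 * t * A + 2 * B, 3 * t ^ 2 * A + 6 * t * B + 6 * C] := by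
  ext i
  fin_cases i <;> simp [momD1, momD2, momD3] <;> ring

theorem eq_momD_combination_iff {ξ : Fin 3 → ℝ} {A B C t : ℝ} :
    ξ = A • momD1 t + B • momD2 t + C • momD3 ↔
      A = ξ 0 ∧ B = ξ 1 / 2 - t * ξ 0 ∧ C = ξ 2 / 6 - t * ξ 1 / 2 + t ^ 2 * ξ 0 / 2 := by
  rw [momD_combination_eq]
  constructor
  · rintro rfl
    simp only [Matrix.cons_val, true_and]
    exact ⟨by ring, by ring⟩
  · rintro ⟨rfl, rfl, rfl⟩
    ext i
    fin_cases i <;> simp <;> ring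

theorem mem_highSlab_iff {a b t : ℝ} {ξ : Fin 3 → ℝ} :
    ξ ∈ highSlab a b t ↔ a ≤ |ξ 0| ∧ |ξ 1 / 2 - t * ξ 0| ≤ b := by
  simp [highSlab, eq_momD_combination_iff]

theorem abs_sub_le_of_mem_highSlab {a b b' s t : ℝ} {ξ : Fin 3 → ℝ} (ha : 0 < a)
    (hs : ξ ∈ highSlab a b s) (ht : ξ ∈ highSlab a b' t) : |s - t| ≤ (b + b') / a := by
  obtain ⟨hξ, hb⟩ := mem_highSlab_iff.1 hs
  obtain ⟨-, hb'⟩ := mem_highSlab_iff.1 ht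
  rw [le_div_iff₀ ha]
  calc
    |s - t| * a ≤ |s - t| * |ξ 0| := by gcongr
    _ = |(ξ 1 / 2 - t * ξ 0) - (ξ 1 / 2 - s * ξ 0)| := by
      rw [← abs_mul]
      congr 1
      ring
    _ ≤ |ξ 1 / 2 - t * ξ 0| + |ξ 1 / 2 - s * ξ 0| := abs_sub _ _
    _ ≤ b + b' := by linarith

theorem high_parts_overlap_general {r c a x y : ℝ} (hr : 0 < r) (ha : 0 < a)
    (hne : (highSlab a (c / r ^ 2) (x / r) ∩ highSlab a (c / r ^ 2) (y / r)).Nonempty) :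
    |x - y| ≤ 2 * c / (a * r) := by
  obtain ⟨ξ, hx, hy⟩ := hne
  have hparam : |x / r - y / r| ≤ (c / r ^ 2 + c / r ^ 2) / a :=
    abs_sub_le_of_mem_highSlab ha hx hy
  calc
    |x - y| = |x / r - y / r| * r := by
      rw [← sub_div, abs_div, abs_of_pos hr, div_mul_cancel₀ _ hr.ne']
    _ ≤ (c / r ^ 2 + c / r ^ 2) / a * r := by gcongr
    _ = 2 * c / (a * r) := by
      field_simp
      ring

/-- **Proposition 2.11 (overlap of the high parts).** If `S_l ∩ S_{l'} ≠ ∅` then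
`|l − l'| ≤ 2c/(ar)`. -/
theorem high_parts_overlap
    (r : ℕ) (hr : 1 ≤ r) (R c a : ℝ) (hR : 0 < R) (hc : 1 ≤ c) (ha : 0 < a)
    (l l' : ℕ) (hl : l < r) (hl' : l' < r)
    (hne : (Sbox r R c a l ∩ Sbox r R c a l').Nonempty) :
    |(l : ℝ) - (l' : ℝ)| ≤ 2 * c / (a * r) := by
  exact high_parts_overlap_general (by exact_mod_cast hr) ha
    (hne.mono (inter_subset_inter Sbox_subset_highSlab Sbox_subset_highSlab))
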